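/- Let f be a self-usage utility function and let 0 ≤ p < q < f'(0). Let s₀, s ∈ [0,1) satisfy f'(1−s₀) = p and f'(1−s) = q (so s₀ < s). Then 0 < f(1−s₀) − f(1−s) − p·(s−s₀) < (q−p)·(s−s₀); consequently the threshold t* = s − (f(1−s₀) − f(1−s) − p·(s−s₀))/(q−p) of the optimal linear loyalty program satisfies s₀ < t* < s. -/

import Mathlib

/-- A self-usage utility function `f` with derivative `f'`:
differentiable on `[0,1]`, strictly increasing on `[0,1]`,
strictly concave on `[0,1]` (with `f'` strictly decreasing), and `f' 1 = 0`. -/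
def SelfUsage (f f' : ℝ → ℝ) : Prop :=
  (∀ x ∈ Set.Icc (0:ℝ) 1, HasDerivWithinAt f (f' x) (Set.Icc (0:ℝ) 1) x) ∧
  StrictMonoOn f (Set.Icc (0:ℝ) 1) ∧
  StrictConcaveOn ℝ (Set.Icc (0:ℝ) 1) f ∧
  StrictAntiOn f' (Set.Icc (0:ℝ) 1) ∧
  f' 1 = 0

/-!
Strict concavity places the slope of `f` between `1 - s` and `1 - s₀` strictly between the end
derivatives `p` and `q`. Hence the net gain `f (1 - s₀) - f (1 - s) - p * (s - s₀)` is a proper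
positive fraction of `(q - p) * (s - s₀)`, so dividing it by `q - p` pulls the threshold back from
`s` by less than `s - s₀`.
-/

section StrictConcave

variable {S : Set ℝ} {f : ℝ → ℝ}

lemma sub_mem_Ioo_of_strictConcaveOn_of_hasDerivWithinAt (hf : StrictConcaveOn ℝ S f)
    {a b m n : ℝ} (ha : a ∈ S) (hb : b ∈ S) (hab : a < b)
    (hfa : HasDerivWithinAt f m S a) (hfb : HasDerivWithinAt f n S b) :
    f b - f a ∈ Set.Ioo (n * (b - a)) (m * (b - a)) := by
  have hlower : n < slope f a b := hf.lt_slope_of_hasDerivWithinAt ha hb hab hfb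
  have hupper : slope f a b < m := hf.slope_lt_of_hasDerivWithinAt ha hb hab hfa
  rw [slope_def_field] at hlower hupper
  exact ⟨(lt_div_iff₀ (sub_pos.2 hab)).1 hlower, (div_lt_iff₀ (sub_pos.2 hab)).1 hupper⟩

lemma strictAntiOn_of_strictConcaveOn_of_hasDerivWithinAt {f' : ℝ → ℝ}
    (hf : StrictConcaveOn ℝ S f) (hf' : ∀ x ∈ S, HasDerivWithinAt f (f' x) S x) :
    StrictAntiOn f' S := fun a ha b hb hab ↦
  (hf.lt_slope_of_hasDerivWithinAt ha hb hab (hf' b hb)).trans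
    (hf.slope_lt_of_hasDerivWithinAt ha hb hab (hf' a ha))

end StrictConcave

lemma sub_div_mem_Ioo {K : Type*} [Field K] [LinearOrder K] [IsStrictOrderedRing K]
    {a b c d : K} (hd : 0 < d) (hc : c ∈ Set.Ioo 0 (d * (b - a))) :
    b - c / d ∈ Set.Ioo a b :=
  ⟨lt_sub_comm.1 ((div_lt_iff₀' hd).2 hc.2), sub_lt_self b (div_pos hc.1 hd)⟩

theorem optimal_threshold_bounds_general {S : Set ℝ} {f f' : ℝ → ℝ}
    (hf : StrictConcaveOn ℝ S f) (hf' : ∀ x ∈ S, HasDerivWithinAt f (f' x) S x)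
    {p q s₀ s : ℝ} (hpq : p < q) (hs₀ : 1 - s₀ ∈ S) (hs : 1 - s ∈ S)
    (hds₀ : f' (1 - s₀) = p) (hds : f' (1 - s) = q) :
    0 < f (1 - s₀) - f (1 - s) - p * (s - s₀) ∧
    f (1 - s₀) - f (1 - s) - p * (s - s₀) < (q - p) * (s - s₀) ∧
    s₀ < s - (f (1 - s₀) - f (1 - s) - p * (s - s₀)) / (q - p) ∧
    s - (f (1 - s₀) - f (1 - s) - p * (s - s₀)) / (q - p) < s := by
  subst hds₀ hds
  have hlt : 1 - s < 1 - s₀ :=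
    ((strictAntiOn_of_strictConcaveOn_of_hasDerivWithinAt hf hf').lt_iff_gt hs₀ hs).1 hpq
  have hincr := sub_mem_Ioo_of_strictConcaveOn_of_hasDerivWithinAt hf hs hs₀ hlt
    (hf' _ hs) (hf' _ hs₀)
  rw [sub_sub_sub_cancel_left] at hincr
  have hgain : f (1 - s₀) - f (1 - s) - f' (1 - s₀) * (s - s₀) ∈
      Set.Ioo 0 ((f' (1 - s) - f' (1 - s₀)) * (s - s₀)) :=
    ⟨sub_pos.2 hincr.1, by rw [sub_mul]; exact sub_lt_sub_right hincr.2 _⟩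
  exact ⟨hgain.1, hgain.2, sub_div_mem_Ioo (sub_pos.2 hpq) hgain⟩

/-- the threshold t* of the optimal linear loyalty program lies
strictly between s₀ and s. -/
theorem optimal_threshold_bounds
    (f f' : ℝ → ℝ) (hf : SelfUsage f f')
    (p q : ℝ) (hp : 0 ≤ p) (hpq : p < q) (hq : q < f' 0)
    (s₀ s : ℝ) (hs₀ : s₀ ∈ Set.Ico (0:ℝ) 1) (hs : s ∈ Set.Ico (0:ℝ) 1)
    (hds₀ : f' (1 - s₀) = p) (hds : f' (1 - s) = q) :
    0 < f (1 - s₀) - f (1 - s) - p * (s - s₀) ∧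
    f (1 - s₀) - f (1 - s) - p * (s - s₀) < (q - p) * (s - s₀) ∧
    s₀ < s - (f (1 - s₀) - f (1 - s) - p * (s - s₀)) / (q - p) ∧
    s - (f (1 - s₀) - f (1 - s) - p * (s - s₀)) / (q - p) < s :=
  optimal_threshold_bounds_general hf.2.2.1 hf.1 hpq
    (Set.Icc.one_sub_mem (Set.Ico_subset_Icc_self hs₀))
    (Set.Icc.one_sub_mem (Set.Ico_subset_Icc_self hs)) hds₀ hds
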